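/- In N(n), suppose 1 ≤ i < j ≤ n and 0 < k' < k ≤ j − i. Then Y_{[i,j];k} Y_{[i,i+k−1];k'} = Y_{[i,j];k'} Y_{[i+k',j];k−k'}. -/

import Mathlib

/-- Index type for the generators `Y_1, …, Y_{n-1}` of the nilCoxeter algebra `N(n)`. -/
abbrev NIdx (n : ℕ) := {i : ℕ // 1 ≤ i ∧ i + 1 ≤ n}

/-- The generator `Y_i` in the free algebra (junk value `0` outside `1 ≤ i ≤ n-1`). -/
noncomputable def Yf (n : ℕ) (i : ℕ) : FreeAlgebra ℤ (NIdx n) :=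
  if h : 1 ≤ i ∧ i + 1 ≤ n then FreeAlgebra.ι ℤ ⟨i, h⟩ else 0

/-- The defining relations of the nilCoxeter algebra `N(n)` of the symmetric group `S_n`:
`Y_i² = 0`, the braid relations `Y_i Y_{i+1} Y_i = Y_{i+1} Y_i Y_{i+1}`, and the
commutation relations `Y_i Y_j = Y_j Y_i` for `|i - j| ≥ 2`. -/
inductive NRel (n : ℕ) : FreeAlgebra ℤ (NIdx n) → FreeAlgebra ℤ (NIdx n) → Prop
  | sq (i : NIdx n) : NRel n (FreeAlgebra.ι ℤ i * FreeAlgebra.ι ℤ i) 0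
  | braid (i j : NIdx n) (h : j.1 = i.1 + 1) :
      NRel n (FreeAlgebra.ι ℤ i * FreeAlgebra.ι ℤ j * FreeAlgebra.ι ℤ i)
        (FreeAlgebra.ι ℤ j * FreeAlgebra.ι ℤ i * FreeAlgebra.ι ℤ j)
  | comm (i j : NIdx n) (h : i.1 + 2 ≤ j.1 ∨ j.1 + 2 ≤ i.1) :
      NRel n (FreeAlgebra.ι ℤ i * FreeAlgebra.ι ℤ j)
        (FreeAlgebra.ι ℤ j * FreeAlgebra.ι ℤ i)

/-- The nilCoxeter algebra `N(n)` of the symmetric group `S_n` over `ℤ`. -/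
abbrev Nring (n : ℕ) := RingQuot (NRel n)

/-- The image of the generator `Y_i` in `N(n)`. -/
noncomputable def Ygen (n : ℕ) (i : ℕ) : Nring n :=
  RingQuot.mkRingHom (NRel n) (Yf n i)

/-- `Y_{[i,j]} = Y_{j-1} Y_{j-2} ⋯ Y_{i+1} Y_i`, with `Y_{[i,i]} = 1`. -/
noncomputable def Yint (n : ℕ) (i j : ℕ) : Nring n :=
  (((List.range' i (j - i)).reverse).map (Ygen n)).prod

/-- `Y_{[i,j];k} = Y_{[i,j+1-k]} Y_{[i+1,j+2-k]} ⋯ Y_{[i+k-1,j]}`, with `Y_{[i,j];0} = 1`. -/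
noncomputable def Yintk (n : ℕ) (i j k : ℕ) : Nring n :=
  ((List.range k).map fun t => Yint n (i + t) (j + 1 - k + t)).prod

/-!
Read `Y_s` as the crossing of the strands `s` and `s + 1`. Then `Y_{[i,j];k}` is the crossing of
two adjacent blocks of strands, the left one of `k` strands and the right one of `j + 1 - k - i`,
and the factorisation is the Yang–Baxter equation for three adjacent blocks of `p = k'`,
`q = k - k'` and `r = j + 1 - k - i` strands: both sides reverse the order of the three blocks. As
in a braided monoidal category, it follows from naturality, which slides the crossing of the `p`-
and `q`-blocks through the crossing of both with the `r`-block, and from the two hexagon identities,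
which split the crossing with a union of two blocks.
-/

section Monoid

variable {M : Type*} [Monoid M]

/-- The relations of Artin's braid monoid for the elements `y a` with `m ≤ a < n`. -/
structure IsBraidFamily (y : ℕ → M) (m n : ℕ) : Prop where
  braid : ∀ a, m ≤ a → a + 1 < n → y a * y (a + 1) * y a = y (a + 1) * y a * y (a + 1)
  comm : ∀ a b, m ≤ a → a + 2 ≤ b → b < n → Commute (y a) (y b)

/-- The descending product `y (i + l - 1) * ⋯ * y (i + 1) * y i` of `l` factors, which moves the
strand at position `i` past the `l` strands to its right. It is parametrised by its length instead
of its right end, so that no truncated subtraction occurs. -/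
def descProd (y : ℕ → M) (i l : ℕ) : M :=
  ((List.range' i l).reverse.map y).prod

/-- The crossing of the block of `p` strands starting at position `i` with the block of `q` strands
to its right: the strands of the left block are moved one by one, the rightmost being the last
factor of the product. -/
def blockCrossing (y : ℕ → M) (i p q : ℕ) : M :=
  ((List.range p).map fun t => descProd y (i + t) q).prod

variable {y : ℕ → M} {m n i p q r s : ℕ} {g : M}

theorem descProd_add (y : ℕ → M) (i p q : ℕ) :
    descProd y i (p + q) = descProd y (i + p) q * descProd y i p := by
  simp [descProd, ← List.range'_append_1]

theorem descProd_one (y : ℕ → M) (i : ℕ) : descProd y i 1 = y i := by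
  simp [descProd]

theorem blockCrossing_zero_left (y : ℕ → M) (i q : ℕ) : blockCrossing y i 0 q = 1 :=
  rfl

theorem blockCrossing_one_left (y : ℕ → M) (i q : ℕ) :
    blockCrossing y i 1 q = descProd y i q := by
  simp [blockCrossing]

theorem blockCrossing_add_left (y : ℕ → M) (i p q r : ℕ) :
    blockCrossing y i (p + q) r = blockCrossing y i p r * blockCrossing y (i + p) q r := by
  simp [blockCrossing, List.range_add, Function.comp_def, add_assoc]

theorem blockCrossing_succ_left (y : ℕ → M) (i p q : ℕ) :
    blockCrossing y i (p + 1) q = blockCrossing y i p q * descProd y (i + p) q := by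
  rw [blockCrossing_add_left, blockCrossing_one_left]

theorem blockCrossing_two_one (y : ℕ → M) (i : ℕ) :
    blockCrossing y i 2 1 = y i * y (i + 1) := by
  rw [blockCrossing_succ_left, blockCrossing_one_left, descProd_one, descProd_one]

theorem semiconjBy_descProd
    (h : ∀ s, i ≤ s → s < i + p → SemiconjBy g (y s) (y (s + r))) :
    SemiconjBy g (descProd y i p) (descProd y (i + r) p) := by
  induction p with
  | zero => exact SemiconjBy.one_right g
  | succ p ih =>
    rw [descProd_add, descProd_add, descProd_one, descProd_one, add_right_comm i r p]
    exact (h (i + p) (by omega) (by omega)).mul_right (ih fun s hs hs' => h s hs (by omega))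

theorem semiconjBy_blockCrossing
    (h : ∀ s, i ≤ s → s + 1 < i + p + q → SemiconjBy g (y s) (y (s + r))) :
    SemiconjBy g (blockCrossing y i p q) (blockCrossing y (i + r) p q) := by
  induction p with
  | zero => exact SemiconjBy.one_right g
  | succ p ih =>
    rw [blockCrossing_succ_left, blockCrossing_succ_left, add_right_comm i r p]
    exact (ih fun s hs hs' => h s hs (by omega)).mul_right
      (semiconjBy_descProd fun s hs hs' => h s (by omega) (by omega))

namespace IsBraidFamily

theorem commute_blockCrossing_of_le (hy : IsBraidFamily y m n) (hi : m ≤ i)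
    (hs : i + p + q ≤ s) (hsn : s < n) : Commute (blockCrossing y i p q) (y s) :=
  Commute.symm <| semiconjBy_blockCrossing (r := 0) fun a ha ha' =>
    (hy.comm a s (by omega) (by omega) hsn).symm

theorem commute_blockCrossing_of_add_two_le (hy : IsBraidFamily y m n) (hs : m ≤ s)
    (hsi : s + 2 ≤ i) (hn : i + p + q ≤ n + 1) : Commute (blockCrossing y i p q) (y s) :=
  Commute.symm <| semiconjBy_blockCrossing (r := 0) fun a ha ha' =>
    hy.comm s a hs (by omega) (by omega)

theorem blockCrossing_add_right (hy : IsBraidFamily y m n) (hi : m ≤ i)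
    (hn : i + p + q + r ≤ n + 1) :
    blockCrossing y i p (q + r) = blockCrossing y (i + q) p r * blockCrossing y i p q := by
  induction p with
  | zero => simp only [blockCrossing_zero_left, mul_one]
  | succ p ih =>
    have hcomm : Commute (blockCrossing y i p q) (descProd y (i + p + q) r) :=
      semiconjBy_descProd (r := 0) fun s hs hs' =>
        hy.commute_blockCrossing_of_le hi hs (by omega)
    calc blockCrossing y i (p + 1) (q + r)
        = blockCrossing y (i + q) p r *
            (blockCrossing y i p q * descProd y (i + p + q) r) * descProd y (i + p) q := by
          simp only [blockCrossing_succ_left, ih (by omega), descProd_add, mul_assoc]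
      _ = blockCrossing y (i + q) (p + 1) r * blockCrossing y i (p + 1) q := by
          simp only [hcomm.eq, blockCrossing_succ_left, add_right_comm i q p, mul_assoc]

theorem semiconjBy_blockCrossing_two (hy : IsBraidFamily y m n) (hi : m ≤ i)
    (hn : i + r < n) : SemiconjBy (blockCrossing y i 2 r) (y i) (y (i + r)) := by
  induction r with
  | zero => simp [blockCrossing, descProd]
  | succ r ih =>
    have hbraid : SemiconjBy (blockCrossing y (i + r) 2 1) (y (i + r)) (y (i + r + 1)) := by
      rw [blockCrossing_two_one, SemiconjBy, ← mul_assoc]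
      exact hy.braid (i + r) (by omega) hn
    rw [hy.blockCrossing_add_right hi (by omega)]
    exact hbraid.mul_left (ih (by omega))

theorem semiconjBy_blockCrossing_generator (hy : IsBraidFamily y m n) (hi : m ≤ i)
    (hn : i + p + r ≤ n + 1) (his : i ≤ s) (hsp : s + 1 < i + p) :
    SemiconjBy (blockCrossing y i p r) (y s) (y (s + r)) := by
  obtain ⟨u, rfl⟩ := Nat.exists_eq_add_of_le his
  obtain ⟨v, rfl⟩ : ∃ v, p = u + 2 + v := Nat.exists_eq_add_of_le (by omega)
  rw [blockCrossing_add_left, blockCrossing_add_left]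
  have hleft : Commute (blockCrossing y i u r) (y (i + u + r)) :=
    hy.commute_blockCrossing_of_le hi le_rfl (by omega)
  have hmid : SemiconjBy (blockCrossing y (i + u) 2 r) (y (i + u)) (y (i + u + r)) :=
    hy.semiconjBy_blockCrossing_two (by omega) (by omega)
  have hright : Commute (blockCrossing y (i + (u + 2)) v r) (y (i + u)) :=
    hy.commute_blockCrossing_of_add_two_le (by omega) (by omega) (by omega)
  exact (SemiconjBy.mul_left hleft hmid).mul_left hright

end IsBraidFamily

theorem Yintk_factorisation_general (hy : IsBraidFamily y m n) (hi : m ≤ i)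
    (hn : i + p + q + r ≤ n + 1) :
    blockCrossing y i (p + q) r * blockCrossing y i p q =
      blockCrossing y i p (q + r) * blockCrossing y (i + p) q r := by
  have hnaturality : SemiconjBy (blockCrossing y i (p + q) r)
      (blockCrossing y i p q) (blockCrossing y (i + r) p q) :=
    semiconjBy_blockCrossing fun s hs hs' =>
      hy.semiconjBy_blockCrossing_generator hi (by omega) hs (by omega)
  calc blockCrossing y i (p + q) r * blockCrossing y i p q
      = blockCrossing y (i + r) p q * blockCrossing y i (p + q) r := hnaturality.eq
    _ = blockCrossing y (i + r) p q * blockCrossing y i p r * blockCrossing y (i + p) q r := by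
        rw [blockCrossing_add_left, mul_assoc]
    _ = blockCrossing y i p (q + r) * blockCrossing y (i + p) q r := by
        rw [add_comm q r, hy.blockCrossing_add_right hi (by omega)]

end Monoid

theorem Ygen_eq_mkRingHom_ι {n a : ℕ} (h : 1 ≤ a ∧ a + 1 ≤ n) :
    Ygen n a = RingQuot.mkRingHom (NRel n) (FreeAlgebra.ι ℤ ⟨a, h⟩) := by
  rw [Ygen, Yf, dif_pos h]

theorem isBraidFamily_Ygen (n : ℕ) : IsBraidFamily (Ygen n) 1 n where
  braid a ha han := by
    rw [Ygen_eq_mkRingHom_ι ⟨ha, by omega⟩, Ygen_eq_mkRingHom_ι ⟨by omega, han⟩]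
    simpa only [map_mul] using RingQuot.mkRingHom_rel (NRel.braid ⟨a, _⟩ ⟨a + 1, _⟩ rfl)
  comm a b ha hab hbn := by
    rw [Ygen_eq_mkRingHom_ι ⟨ha, by omega⟩, Ygen_eq_mkRingHom_ι ⟨by omega, hbn⟩]
    simpa only [map_mul, commute_iff_eq] using
      RingQuot.mkRingHom_rel (NRel.comm ⟨a, _⟩ ⟨b, _⟩ (Or.inl hab))

theorem Yintk_eq_blockCrossing (n i j k : ℕ) :
    Yintk n i j k = blockCrossing (Ygen n) i k (j + 1 - k - i) := by
  simp only [Yintk, Yint, blockCrossing, descProd, Nat.add_sub_add_right]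

/-- In `N(n)`, if `1 ≤ i < j ≤ n` and `0 < k' < k ≤ j - i`, then
`Y_{[i,j];k} Y_{[i,i+k-1];k'} = Y_{[i,j];k'} Y_{[i+k',j];k-k'}`. -/
theorem Yintk_factorisation (n : ℕ) (hn : 2 ≤ n) (i j k k' : ℕ)
    (h1 : 1 ≤ i) (h2 : i < j) (h3 : j ≤ n)
    (h4 : 0 < k') (h5 : k' < k) (h6 : k ≤ j - i) :
    Yintk n i j k * Yintk n i (i + k - 1) k' = Yintk n i j k' * Yintk n (i + k') j (k - k') := by
  obtain ⟨q, rfl⟩ := Nat.exists_eq_add_of_le h5.le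
  simp only [Yintk_eq_blockCrossing]
  convert Yintk_factorisation_general (isBraidFamily_Ygen n) (p := k') (q := q)
    (r := j + 1 - (k' + q) - i) h1 (by omega) using 3 <;> omega
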